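/- arXiv:2112.13683 — 2 statements merged into one kernel-verified Lean document; each statement's English description precedes it below -/
import Mathlib

section
/- For all integers d ≥ 2 and 1 ≤ j ≤ d−1, Σ_{k=0}^{d−1} cot((2k+1)π/(2d))·cot((2k+2j+1)π/(2d)) = −d. -/
open Real

lemma sum_shift_periodic (f : ℕ → ℝ) (d : ℕ) (hf : ∀ k, f (k + d) = f k) (j : ℕ) :
    ∑ k ∈ Finset.range d, f (k + j) = ∑ k ∈ Finset.range d, f k := by
  induction j with
  | zero => rfl
  | succ j ih =>
    rw [← ih]
    have h1 := Finset.sum_range_succ (fun k => f (k + j)) d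
    have h2 := Finset.sum_range_succ' (fun k => f (k + j)) d
    have h3 : f (d + j) = f (0 + j) := by rw [add_comm d j, hf, zero_add]
    have h4 : ∑ k ∈ Finset.range d, f (k + (j + 1)) = ∑ k ∈ Finset.range d, f (k + 1 + j) :=
      Finset.sum_congr rfl (fun k _ => by congr 1; ring)
    rw [h4]
    linarith

lemma sin_odd_ne (d k : ℕ) (hd : 2 ≤ d) : Real.sin ((2 * k + 1) * π / (2 * d)) ≠ 0 := by
  intro h
  obtain ⟨n, hn⟩ := Real.sin_eq_zero_iff.1 h
  have hd' : (d : ℝ) ≠ 0 := by positivity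
  have h2 : ((n * (2 * d) : ℝ)) = 2 * k + 1 := by
    have hp := Real.pi_ne_zero
    field_simp at hn
    linarith
  have h3 : n * (2 * (d : ℤ)) = 2 * k + 1 := by exact_mod_cast h2
  have h4 : 2 * (n * (d : ℤ)) = 2 * k + 1 := by rw [← h3]; ring
  omega

lemma cot_mul_cot_aux (a c : ℝ) (ha : Real.sin a ≠ 0) (hb : Real.sin (a + c) ≠ 0)
    (hc : Real.sin c ≠ 0) :
    Real.cot a * Real.cot (a + c) = Real.cot c * (Real.cot a - Real.cot (a + c)) - 1 := by
  simp only [Real.cot_eq_cos_div_sin]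
  have e : Real.sin c = Real.sin (a + c) * Real.cos a - Real.cos (a + c) * Real.sin a := by
    rw [← Real.sin_sub]; congr 1; ring
  have e2 : Real.cos c = Real.cos (a + c) * Real.cos a + Real.sin (a + c) * Real.sin a := by
    rw [← Real.cos_sub]; congr 1; ring
  have key : Real.cos a / Real.sin a - Real.cos (a + c) / Real.sin (a + c)
      = Real.sin c / (Real.sin a * Real.sin (a + c)) := by
    rw [e]; field_simp
  rw [key]
  have : Real.cos c / Real.sin c * (Real.sin c / (Real.sin a * Real.sin (a + c)))
      = Real.cos c / (Real.sin a * Real.sin (a + c)) := by field_simp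
  rw [this, e2]
  field_simp
  ring

/-- for all integers `d ≥ 2` and `1 ≤ j ≤ d-1`,
`Σ_{k=0}^{d-1} cot((2k+1)π/(2d))·cot((2k+2j+1)π/(2d)) = -d`. -/
theorem stmt16 (d j : ℕ) (hd : 2 ≤ d) (hj1 : 1 ≤ j) (hj2 : j ≤ d - 1) :
    ∑ k ∈ Finset.range d,
        Real.cot ((2 * k + 1) * π / (2 * d)) * Real.cot ((2 * k + 2 * j + 1) * π / (2 * d)) =
      -(d : ℝ) := by
  have hd' : (0 : ℝ) < d := by positivity
  have hc : Real.sin (j * π / d) ≠ 0 := by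
    have hj : (0 : ℝ) < j := by exact_mod_cast hj1
    have hjd : (j : ℝ) < d := by exact_mod_cast (by omega : j < d)
    apply ne_of_gt
    apply Real.sin_pos_of_pos_of_lt_pi (by positivity)
    rw [div_lt_iff₀ hd']
    nlinarith [Real.pi_pos]
  let f : ℕ → ℝ := fun k => Real.cot ((2 * k + 1) * π / (2 * d))
  have hf : ∀ k, f (k + d) = f k := by
    intro k
    have : (2 * ((k + d : ℕ) : ℝ) + 1) * π / (2 * d) = (2 * k + 1) * π / (2 * d) + π := by
      push_cast; field_simp; ring
    simp only [f, this, Real.cot_eq_cos_div_sin, Real.cos_add_pi, Real.sin_add_pi, neg_div_neg_eq]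
  have hs : ∀ k ∈ Finset.range d,
      Real.cot ((2 * k + 1) * π / (2 * d)) * Real.cot ((2 * k + 2 * j + 1) * π / (2 * d))
        = Real.cot (j * π / d) * (f k - f (k + j)) - 1 := by
    intro k _
    have e1 : (2 * (k : ℝ) + 2 * j + 1) * π / (2 * d) = (2 * k + 1) * π / (2 * d) + j * π / d := by
      field_simp; ring
    have e2 : (2 * ((k + j : ℕ) : ℝ) + 1) * π / (2 * d)
        = (2 * k + 1) * π / (2 * d) + j * π / d := by
      push_cast; field_simp; ring
    have hb := sin_odd_ne d (k + j) hd
    simp only [f]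
    rw [e2] at hb ⊢
    rw [e1]
    exact cot_mul_cot_aux _ _ (sin_odd_ne d k hd) hb hc
  rw [Finset.sum_congr rfl hs, Finset.sum_sub_distrib, ← Finset.mul_sum, Finset.sum_sub_distrib,
    sum_shift_periodic f d hf j]
  simp
end

section
/- For every even integer d ≥ 2, Σ_{k=0}^{d−1} (−1)^k·cot((2k+1)π/(2d)) = d. -/
open Real

lemma aux_sin (m : ℕ) (x : ℝ) :
    sin (2 * m * x) * cos x
      = sin x * ∑ j ∈ Finset.range m, (cos (2 * j * x) + cos (2 * (j + 1 : ℕ) * x)) := by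
  induction m with
  | zero => simp
  | succ n ih =>
    rw [Finset.sum_range_succ, mul_add, ← ih]
    have e : (2 * ((n + 1 : ℕ) : ℝ) * x) = 2 * n * x + 2 * x := by push_cast; ring
    rw [e, sin_add, cos_add, sin_two_mul, cos_two_mul]
    have h := sin_sq_add_cos_sq x
    have h2 : sin x ^ 2 = 1 - cos x ^ 2 := by linarith
    linear_combination (2 * sin (2 * n * x) * cos x) * h

lemma aux_cos (d j : ℕ) (h0 : 0 < j) (hj : j < d) :
    ∑ k ∈ Finset.range d, cos (2 * j * ((2 * k + 1) * π / (2 * d))) = 0 := by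
  have hd : (0 : ℝ) < d := by exact_mod_cast (by omega : 0 < d)
  have hj0 : (0 : ℝ) < j := by exact_mod_cast h0
  have hjd : (j : ℝ) < d := by exact_mod_cast hj
  have hs : 0 < sin (j * π / d) := by
    apply sin_pos_of_pos_of_lt_pi
    · positivity
    · rw [div_lt_iff₀ hd]; nlinarith [pi_pos]
  have key : ∑ k ∈ Finset.range d,
      2 * sin (j * π / d) * cos (2 * j * ((2 * k + 1) * π / (2 * d))) = 0 := by
    have : ∀ k ∈ Finset.range d,
        2 * sin (j * π / d) * cos (2 * j * ((2 * k + 1) * π / (2 * d)))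
        = (fun k : ℕ => sin (2 * j * k * π / d)) (k + 1)
          - (fun k : ℕ => sin (2 * j * k * π / d)) k := by
      intro k _
      have e1 : 2 * j * ((k + 1 : ℕ) : ℝ) * π / d
        = 2 * j * ((2 * k + 1) * π / (2 * d)) + j * π / d := by
        push_cast; field_simp; ring
      have e2 : 2 * j * (k : ℝ) * π / d
        = 2 * j * ((2 * k + 1) * π / (2 * d)) - j * π / d := by
        field_simp; ring
      simp only []
      rw [e1, e2, sin_add, sin_sub]; ring
    rw [Finset.sum_congr rfl this, Finset.sum_range_sub (fun k : ℕ => sin (2 * j * k * π / d))]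
    have e : 2 * j * (d : ℝ) * π / d = ((2 * j : ℕ) : ℝ) * π := by
      push_cast; field_simp
    simp only [e, sin_nat_mul_pi]
    simp
  rw [← Finset.mul_sum] at key
  rcases mul_eq_zero.1 key with h | h
  · linarith
  · exact h

/-- for every even `d ≥ 2`, `Σ_{k=0}^{d-1} (-1)^k·cot((2k+1)π/(2d)) = d`. -/
theorem stmt18 (d : ℕ) (hd : 2 ≤ d) (heven : Even d) :
    ∑ k ∈ Finset.range d, (-1 : ℝ) ^ k * Real.cot ((2 * k + 1) * π / (2 * d)) = (d : ℝ) := by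
  obtain ⟨m, hm⟩ := heven
  have hd0 : (0 : ℝ) < d := by exact_mod_cast (by omega : 0 < d)
  have hdm : (d : ℝ) = 2 * m := by rw [hm]; push_cast; ring
  have step : ∀ k ∈ Finset.range d, (-1 : ℝ) ^ k * Real.cot ((2 * k + 1) * π / (2 * d))
      = ∑ j ∈ Finset.range m, (cos (2 * j * ((2 * k + 1) * π / (2 * d)))
        + cos (2 * (j + 1 : ℕ) * ((2 * k + 1) * π / (2 * d)))) := by
    intro k hk
    have hkd : (k : ℝ) + 1 ≤ d := by exact_mod_cast Finset.mem_range.1 hk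
    have hs : 0 < sin ((2 * k + 1) * π / (2 * d)) := by
      apply sin_pos_of_pos_of_lt_pi
      · positivity
      · rw [div_lt_iff₀ (by positivity)]; nlinarith [pi_pos]
    have hsin : sin (2 * m * ((2 * k + 1) * π / (2 * d))) = (-1) ^ k := by
      have e : 2 * m * ((2 * k + 1) * π / (2 * d)) = π / 2 + k * π := by
        rw [← hdm]; field_simp; ring
      rw [e, sin_add_nat_mul_pi]; simp
    have := aux_sin m ((2 * k + 1) * π / (2 * d))
    rw [hsin] at this
    rw [Real.cot_eq_cos_div_sin, ← mul_div_assoc, this, mul_div_cancel_left₀ _ hs.ne']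
  rw [Finset.sum_congr rfl step, Finset.sum_comm]
  simp_rw [Finset.sum_add_distrib]
  obtain ⟨n, rfl⟩ : ∃ n, m = n + 1 := ⟨m - 1, by omega⟩
  have hB : ∑ j ∈ Finset.range (n + 1), ∑ k ∈ Finset.range d,
      cos (2 * (j + 1 : ℕ) * ((2 * k + 1) * π / (2 * d))) = 0 :=
    Finset.sum_eq_zero fun j hj =>
      aux_cos d (j + 1) (by omega) (by have := Finset.mem_range.1 hj; omega)
  have hA : ∑ j ∈ Finset.range n, ∑ k ∈ Finset.range d,
      cos (2 * (j + 1 : ℕ) * ((2 * k + 1) * π / (2 * d))) = 0 :=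
    Finset.sum_eq_zero fun j hj =>
      aux_cos d (j + 1) (by omega) (by have := Finset.mem_range.1 hj; omega)
  rw [hB, Finset.sum_range_succ', hA]
  simp
end
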